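/- Let f(x) = ½‖Ax − b‖₂² and λ, M > 0, and let x⁺ = Prox_{λ,M}(x) = argmin_u [f(x) + ⟨∇f(x), u − x⟩ + (M/2)‖u − x‖_u² + λ‖u‖]. Then ω_λ(x⁺) ≤ ‖M(x − x⁺) + ∇f(x⁺) − ∇f(x)‖*. Moreover, if additionally φ_λ(x⁺) ≤ f(x) + ⟨∇f(x), x⁺ − x⟩ + (M/2)‖x⁺ − x‖_u² + λ‖x⁺‖ holds (the backtracking acceptance condition), then φ_λ(x⁺) ≤ φ_λ(x) − (M/2)‖x⁺ − x‖_u². -/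

import Mathlib

/-!
The prox model `mdl B A b N lam M x` is a smooth quadratic plus the convex term `lam * N`.
Comparing its minimizer `x⁺` with the points `x⁺ + t (y - x⁺)`, using convexity of `N`, dividing by
`t` and letting `t → 0` gives the first-order inequality (`IsProx.variational`)
`lam N(x⁺) ≤ lam N(y) + ⟪∇f(x) + M (x⁺ - x), y - x⁺⟫` for every `y`.

Read as a subgradient inequality, it says that `ξ = -lam⁻¹ (∇f(x) + M (x⁺ - x))` lies in `∂N(x⁺)`;
for this `ξ` the vector `lam ξ + ∇f(x⁺)` is exactly the one in the residual bound. Taking `y = x`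
instead bounds the model value at `x⁺` by `φ(x) - (M/2) ‖x⁺ - x‖ᵤ²`, which is the descent bound.
-/

open Matrix

namespace PGH

variable {n m : ℕ}

/-- The inner product `⟪x, y⟫ = xᵀ B y` on `ℝⁿ` induced by a matrix `B`. -/
def ip (B : Matrix (Fin n) (Fin n) ℝ) (x y : Fin n → ℝ) : ℝ :=
  dotProduct x (B.mulVec y)

/-- The norm `‖x‖ᵤ = √(xᵀ B x)` induced by the inner product. -/
noncomputable def normu (B : Matrix (Fin n) (Fin n) ℝ) (x : Fin n → ℝ) : ℝ :=
  Real.sqrt (ip B x x)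

/-- `N` is a norm on `ℝⁿ`. -/
structure IsNorm (N : (Fin n → ℝ) → ℝ) : Prop where
  nonneg : ∀ x, 0 ≤ N x
  eq_zero_iff : ∀ x, N x = 0 ↔ x = 0
  triangle : ∀ x y, N (x + y) ≤ N x + N y
  smul_eq : ∀ (c : ℝ) (x), N (c • x) = |c| * N x

/-- The dual norm `‖y‖* = sup {⟪y, x⟫ : N x ≤ 1}`. -/
noncomputable def dualNorm (B : Matrix (Fin n) (Fin n) ℝ) (N : (Fin n → ℝ) → ℝ)
    (y : Fin n → ℝ) : ℝ :=
  sSup ((fun x => ip B y x) '' {x | N x ≤ 1})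

/-- The subdifferential of `N` at `x` with respect to `⟪·,·⟫`. -/
def subdiff (B : Matrix (Fin n) (Fin n) ℝ) (N : (Fin n → ℝ) → ℝ) (x : Fin n → ℝ) :
    Set (Fin n → ℝ) :=
  {z | ∀ y, N x + ip B z (y - x) ≤ N y}

/-- The set `G` of extreme points of the unit ball of `N`. -/
def extPts (N : (Fin n → ℝ) → ℝ) : Set (Fin n → ℝ) :=
  Set.extremePoints ℝ {x | N x ≤ 1}

/-- The orthogonal complement (w.r.t. `⟪·,·⟫`) of a subspace `T`, as a set. -/
def perp (B : Matrix (Fin n) (Fin n) ℝ) (T : Submodule ℝ (Fin n → ℝ)) :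
    Set (Fin n → ℝ) :=
  {v | ∀ u ∈ T, ip B u v = 0}

/-- A decomposability structure for the norm `N`: for every `x` there are a subspace `T x`
and a vector `e x ∈ T x` with `∂N(x) = {e x + v : v ∈ (T x)ᗮ, ‖v‖* ≤ 1}`. -/
structure DecompStruct (B : Matrix (Fin n) (Fin n) ℝ) (N : (Fin n → ℝ) → ℝ) where
  T : (Fin n → ℝ) → Submodule ℝ (Fin n → ℝ)
  e : (Fin n → ℝ) → (Fin n → ℝ)
  e_mem : ∀ x, e x ∈ T x
  subdiff_eq : ∀ x, subdiff B N x =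
    {ξ | ∃ v ∈ perp B (T x), dualNorm B N v ≤ 1 ∧ ξ = e x + v}

/-- `K x = ‖e x‖ᵤ²`. -/
noncomputable def Kfun (B : Matrix (Fin n) (Fin n) ℝ) (N : (Fin n → ℝ) → ℝ)
    (D : DecompStruct B N) (x : Fin n → ℝ) : ℝ :=
  (normu B (D.e x)) ^ 2

/-- Squared Euclidean norm `‖v‖₂²` on `ℝᵐ`. -/
def sq2 (v : Fin m → ℝ) : ℝ := dotProduct v v

/-- The least-squares loss `f(x) = ½ ‖A x - b‖₂²`. -/
noncomputable def fls (A : Matrix (Fin m) (Fin n) ℝ) (b : Fin m → ℝ) (x : Fin n → ℝ) : ℝ :=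
  (1 / 2) * sq2 (A.mulVec x - b)

/-- The adjoint `A* = B⁻¹ Aᵀ` of `A` w.r.t. `⟪·,·⟫`. -/
noncomputable def Astar (B : Matrix (Fin n) (Fin n) ℝ) (A : Matrix (Fin m) (Fin n) ℝ) :
    Matrix (Fin n) (Fin m) ℝ := B⁻¹ * Aᵀ

/-- The gradient `∇f(x) = A*(A x - b)` of the least-squares loss w.r.t. `⟪·,·⟫`. -/
noncomputable def gradf (B : Matrix (Fin n) (Fin n) ℝ) (A : Matrix (Fin m) (Fin n) ℝ)
    (b : Fin m → ℝ) (x : Fin n → ℝ) : Fin n → ℝ :=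
  (Astar B A).mulVec (A.mulVec x - b)

/-- `ρ` is a valid lower restricted isometry constant of `A` at level `k`. -/
def IsLowerRIP (B : Matrix (Fin n) (Fin n) ℝ) (N : (Fin n → ℝ) → ℝ)
    (A : Matrix (Fin m) (Fin n) ℝ) (k ρ : ℝ) : Prop :=
  0 < ρ ∧ ∀ x : Fin n → ℝ, (N x) ^ 2 ≤ k * (normu B x) ^ 2 →
    ρ * (normu B x) ^ 2 ≤ sq2 (A.mulVec x)

/-- `ρ` is a valid upper restricted isometry constant of `A` at level `k`. -/
def IsUpperRIP (B : Matrix (Fin n) (Fin n) ℝ) (N : (Fin n → ℝ) → ℝ)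
    (A : Matrix (Fin m) (Fin n) ℝ) (k ρ : ℝ) : Prop :=
  0 < ρ ∧ ∀ x : Fin n → ℝ, (N x) ^ 2 ≤ k * (normu B x) ^ 2 →
    sq2 (A.mulVec x) ≤ ρ * (normu B x) ^ 2

/-- The regularized objective `φ_λ(x) = f(x) + λ N(x)`. -/
noncomputable def phi (A : Matrix (Fin m) (Fin n) ℝ) (b : Fin m → ℝ)
    (N : (Fin n → ℝ) → ℝ) (lam : ℝ) (x : Fin n → ℝ) : ℝ :=
  fls A b x + lam * N x

/-- The proximal model `m_{λ,L}(y, x)`. -/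
noncomputable def mdl (B : Matrix (Fin n) (Fin n) ℝ) (A : Matrix (Fin m) (Fin n) ℝ)
    (b : Fin m → ℝ) (N : (Fin n → ℝ) → ℝ) (lam L : ℝ) (y x : Fin n → ℝ) : ℝ :=
  fls A b y + ip B (gradf B A b y) (x - y) + (L / 2) * (normu B (x - y)) ^ 2 + lam * N x

/-- `xp = Prox_{λ,L}(y)`, i.e. `xp` minimizes `m_{λ,L}(y, ·)`. -/
def IsProx (B : Matrix (Fin n) (Fin n) ℝ) (A : Matrix (Fin m) (Fin n) ℝ)
    (b : Fin m → ℝ) (N : (Fin n → ℝ) → ℝ) (lam L : ℝ) (y xp : Fin n → ℝ) : Prop :=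
  ∀ u, mdl B A b N lam L y xp ≤ mdl B A b N lam L y u

/-- `ω_λ(x) = min_{ξ ∈ ∂N(x)} ‖λ ξ + ∇f(x)‖*`. -/
noncomputable def omega (B : Matrix (Fin n) (Fin n) ℝ) (A : Matrix (Fin m) (Fin n) ℝ)
    (b : Fin m → ℝ) (N : (Fin n → ℝ) → ℝ) (lam : ℝ) (x : Fin n → ℝ) : ℝ :=
  sInf ((fun ξ => dualNorm B N (lam • ξ + gradf B A b x)) '' subdiff B N x)

/-- Assumption 1 of the paper, phrased for given valid restricted isometry constants
`ρlow = ρ₋(A, c k₀ (1+γ)²)`, `ρlow2 = ρ₋(A, 72 r c k₀ (1+γ) γinc)` and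
`ρup2 = ρ₊(A, 72 r c k₀ (1+γ) γinc)`. -/
def Assumption1 (B : Matrix (Fin n) (Fin n) ℝ) (N : (Fin n → ℝ) → ℝ)
    (A : Matrix (Fin m) (Fin n) ℝ) (z : Fin m → ℝ)
    (c k₀ γinc lamtgt r δ γ ρlow ρlow2 ρup2 : ℝ) : Prop :=
  dualNorm B N ((Astar B A).mulVec z) ≤ lamtgt / 4 ∧
  1 < r ∧ 0 < δ ∧ δ ≤ 1 / 4 ∧
  γ = (lamtgt * (1 + δ) + dualNorm B N ((Astar B A).mulVec z)) /
      (lamtgt * (1 - δ) - dualNorm B N ((Astar B A).mulVec z)) ∧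
  IsLowerRIP B N A (c * k₀ * (1 + γ) ^ 2) ρlow ∧
  IsLowerRIP B N A (72 * r * c * k₀ * (1 + γ) * γinc) ρlow2 ∧
  IsUpperRIP B N A (72 * r * c * k₀ * (1 + γ) * γinc) ρup2 ∧
  ρlow / ρup2 > c / r

/-- One backtracking step: `M` is the smallest element of `{Lt γinc^j : j ≥ 0}`
for which the proximal point is accepted, and `xt1` is that proximal point. -/
def BacktrackMin (B : Matrix (Fin n) (Fin n) ℝ) (A : Matrix (Fin m) (Fin n) ℝ)
    (b : Fin m → ℝ) (N : (Fin n → ℝ) → ℝ) (lam γinc Lt : ℝ)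
    (xt : Fin n → ℝ) (M : ℝ) (xt1 : Fin n → ℝ) : Prop :=
  (∃ j : ℕ, M = Lt * γinc ^ j) ∧
  IsProx B A b N lam M xt xt1 ∧
  phi A b N lam xt1 ≤ mdl B A b N lam M xt xt1 ∧
  ∀ j : ℕ, Lt * γinc ^ j < M →
    ∀ u, IsProx B A b N lam (Lt * γinc ^ j) xt u →
      ¬ phi A b N lam u ≤ mdl B A b N lam (Lt * γinc ^ j) xt u

/-- The iterates of the proximal-gradient subroutine with backtracking. -/
structure ProxGradSeq (B : Matrix (Fin n) (Fin n) ℝ) (A : Matrix (Fin m) (Fin n) ℝ)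
    (b : Fin m → ℝ) (N : (Fin n → ℝ) → ℝ) (lam γinc γdec Lmin : ℝ)
    (x : ℕ → Fin n → ℝ) (L M : ℕ → ℝ) : Prop where
  step : ∀ t, BacktrackMin B A b N lam γinc (L t) (x t) (M (t + 1)) (x (t + 1))
  Lupdate : ∀ t, L (t + 1) = max Lmin (M (t + 1) / γdec)

/-- The quantity `‖M (x⁻ - x) + ∇f(x) - ∇f(x⁻)‖*` used in the stopping criterion. -/
noncomputable def stopQ (B : Matrix (Fin n) (Fin n) ℝ) (A : Matrix (Fin m) (Fin n) ℝ)
    (b : Fin m → ℝ) (N : (Fin n → ℝ) → ℝ) (Mt : ℝ) (xprev xcur : Fin n → ℝ) : ℝ :=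
  dualNorm B N (Mt • (xprev - xcur) + (gradf B A b xcur - gradf B A b xprev))

section ip

variable (B : Matrix (Fin n) (Fin n) ℝ) (x y z : Fin n → ℝ) (t : ℝ)

lemma ip_add_left : ip B (x + y) z = ip B x z + ip B y z := by
  simp [ip, add_dotProduct]

lemma ip_add_right : ip B x (y + z) = ip B x y + ip B x z := by
  simp [ip, mulVec_add]

lemma ip_smul_left : ip B (t • x) y = t * ip B x y := by
  simp [ip]

lemma ip_smul_right : ip B x (t • y) = t * ip B x y := by
  simp [ip, mulVec_smul]

variable {B}

lemma ip_comm (hB : B.PosDef) : ip B x y = ip B y x := by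
  have hT : Bᵀ = B := by simpa using hB.isHermitian.eq
  rw [ip, ip, dotProduct_mulVec, ← mulVec_transpose, hT, dotProduct_comm]

lemma ip_self_nonneg (hB : B.PosDef) : 0 ≤ ip B x x := by
  simpa [ip] using hB.posSemidef.dotProduct_mulVec_nonneg x

lemma normu_sq (hB : B.PosDef) : normu B x ^ 2 = ip B x x :=
  Real.sq_sqrt (ip_self_nonneg x hB)

end ip

/-- The value `0` is always attained at the origin, so the supremum is nonnegative (also in the
unbounded case, where the real `sSup` is `0`). -/
lemma dualNorm_nonneg (B : Matrix (Fin n) (Fin n) ℝ) {N : (Fin n → ℝ) → ℝ} (hN : IsNorm N)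
    (y : Fin n → ℝ) : 0 ≤ dualNorm B N y := by
  refine Real.sSup_nonneg' ⟨0, ⟨0, ?_, by simp [ip]⟩, le_rfl⟩
  simp [(hN.eq_zero_iff 0).2 rfl]

/-- An affine function that is nonnegative on `(0, 1]` and has nonnegative slope is nonnegative
at `0`. -/
lemma nonneg_of_forall_add_mul {a c : ℝ} (hc : 0 ≤ c)
    (h : ∀ t : ℝ, 0 < t → t ≤ 1 → 0 ≤ a + t * c) : 0 ≤ a := by
  by_contra! ha
  have hca : 0 < c - a := by linarith
  -- At `t = -a / (c - a)` the affine function takes the value `-a² / (c - a) < 0`.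
  have h1 := h (-a / (c - a)) (div_pos (by linarith) hca)
    (by rw [div_le_one hca]; linarith)
  have h2 : a + -a / (c - a) * c = -(a ^ 2 / (c - a)) := by
    field_simp
    ring
  have h3 : 0 < a ^ 2 / (c - a) := div_pos (by nlinarith) hca
  linarith

/-- First-order optimality condition of the proximal point. -/
lemma IsProx.variational {B : Matrix (Fin n) (Fin n) ℝ} (hB : B.PosDef)
    {N : (Fin n → ℝ) → ℝ} (hN : IsNorm N)
    {A : Matrix (Fin m) (Fin n) ℝ} {b : Fin m → ℝ}
    {lam M : ℝ} (hlam : 0 < lam) (hM : 0 < M)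
    {x xplus : Fin n → ℝ} (hprox : IsProx B A b N lam M x xplus) (y : Fin n → ℝ) :
    lam * N xplus ≤ lam * N y + ip B (gradf B A b x + M • (xplus - x)) (y - xplus) := by
  set g := gradf B A b x with hg
  set d := y - xplus with hd
  set p := xplus - x with hp
  have hdd := ip_self_nonneg d hB
  suffices h : 0 ≤ lam * N y - lam * N xplus + ip B (g + M • p) d by linarith
  refine nonneg_of_forall_add_mul (c := M / 2 * ip B d d) (by positivity) fun t ht ht1 => ?_
  have hconv : N (xplus + t • d) ≤ (1 - t) * N xplus + t * N y := by
    have hu : xplus + t • d = (1 - t) • xplus + t • y := by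
      rw [hd]
      module
    rw [hu]
    refine (hN.triangle _ _).trans ?_
    rw [hN.smul_eq, hN.smul_eq, abs_of_nonneg (sub_nonneg.2 ht1), abs_of_pos ht]
  have hmin := hprox (xplus + t • d)
  have hpu : xplus + t • d - x = p + t • d := by
    rw [hp]
    module
  simp only [mdl, hpu, normu_sq _ hB, ← hg, ← hp, ip_add_left, ip_add_right, ip_smul_left,
    ip_smul_right, ip_comm d p hB] at hmin ⊢
  have hconv' := mul_le_mul_of_nonneg_left hconv hlam.le
  refine nonneg_of_mul_nonneg_right (a := t) ?_ ht
  linarith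

/-- For a proximal step `x⁺ = Prox_{λ,M}(x)`: the optimality residual
satisfies `ω_λ(x⁺) ≤ ‖M (x - x⁺) + ∇f(x⁺) - ∇f(x)‖*`, and if the backtracking acceptance
condition `φ_λ(x⁺) ≤ m_{λ,M}(x, x⁺)` holds then `φ_λ(x⁺) ≤ φ_λ(x) - (M/2) ‖x⁺ - x‖ᵤ²`. -/
theorem prox_step_residual_and_descent {n m : ℕ}
    (B : Matrix (Fin n) (Fin n) ℝ) (hB : B.PosDef)
    (N : (Fin n → ℝ) → ℝ) (hN : IsNorm N)
    (A : Matrix (Fin m) (Fin n) ℝ) (b : Fin m → ℝ)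
    (lam M : ℝ) (hlam : 0 < lam) (hM : 0 < M)
    (x xplus : Fin n → ℝ) (hprox : IsProx B A b N lam M x xplus) :
    omega B A b N lam xplus ≤
      dualNorm B N (M • (x - xplus) + (gradf B A b xplus - gradf B A b x)) ∧
    (phi A b N lam xplus ≤ mdl B A b N lam M x xplus →
      phi A b N lam xplus ≤ phi A b N lam x - (M / 2) * (normu B (xplus - x)) ^ 2) := by
  have key := hprox.variational hB hN hlam hM
  constructor
  · refine csInf_le ⟨0, ?_⟩ ⟨-lam⁻¹ • (gradf B A b x + M • (xplus - x)), fun y => ?_, ?_⟩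
    · rintro _ ⟨ξ, -, rfl⟩
      exact dualNorm_nonneg B hN _
    · rw [ip_smul_left]
      have hdiv := mul_le_mul_of_nonneg_left (key y) (inv_nonneg.2 hlam.le)
      rw [mul_add, inv_mul_cancel_left₀ hlam.ne', inv_mul_cancel_left₀ hlam.ne'] at hdiv
      linarith
    · beta_reduce
      congr 1
      rw [smul_smul, mul_neg, mul_inv_cancel₀ hlam.ne']
      module
  · intro hacc
    have hx := key x
    have hneg : x - xplus = (-1 : ℝ) • (xplus - x) := by module
    rw [hneg, ip_smul_right, ip_add_left, ip_smul_left] at hx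
    simp only [mdl, phi, normu_sq _ hB] at hacc ⊢
    linarith

end PGH
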